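/- Let {w_T(x_1,…,x_d)}_{T∈F} be an X-inert family of smooth functions, each supported on x_i ≍ X_i for i = 1,…,d, and let f be a fixed smooth function of d−1 variables. Define W_T(x_2,…,x_d) = w_T(X_1·f(x_2/X_2,…,x_d/X_d), x_2,…,x_d). Then {W_T}_{T∈F} is an X-inert family of smooth functions of (x_2,…,x_d). -/

import Mathlib

/-!
Everything is transported to the coordinates in which the supports are the fixed box `[1,2]^d`.
Put `v_T(u) = w_T(a_T u)` with `a_T = (X_1, …, X_d)`. Since `a_T ≤ x ≤ 2 a_T` on the support of
`w_T`, inertness of `w` says that every mixed partial derivative of `v_T` of order `n` is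
`O(X_T ^ n)`; because second derivatives are symmetric, the partial derivatives along all words
in the coordinates are among these, so the norm of the whole `n`-th derivative of `v_T` is
`O(X_T ^ n)` (`exists_bound_rescaled`).

The specialized function is `W_T(y) = V_T(y / X)` with `V_T = v_T ∘ φ` and `φ(u) = (f(u), u)`.
The map `φ` is fixed, so its derivatives are bounded on the compact box `[1,2]^{d-1}`
(`exists_pow_bound`), and the Faà di Bruno estimate `norm_iteratedFDeriv_comp_le` together with
`1 ≤ X_T` gives `O(X_T ^ n)` for the `n`-th derivative of `V_T` there. Outside this box `V_T` and
all its derivatives vanish, and undoing the scaling only costs a factor `|u^j| ≤ 2^n`.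
-/

open MeasureTheory Finset Function

noncomputable section

/-- Partial derivative in the `i`-th coordinate of a function of `d` real variables. -/
def pd {E : Type*} [NormedAddCommGroup E] [NormedSpace ℝ E] {d : ℕ} (i : Fin d)
    (f : (Fin d → ℝ) → E) (x : Fin d → ℝ) : E :=
  deriv (fun s => f (Function.update x i s)) (x i)

/-- Iterated partial derivative `∂_{x_1}^{j_1} ⋯ ∂_{x_d}^{j_d}` with multi-index `j`. -/
def pdM {E : Type*} [NormedAddCommGroup E] [NormedSpace ℝ E] {d : ℕ} (j : Fin d → ℕ)
    (f : (Fin d → ℝ) → E) : (Fin d → ℝ) → E :=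
  (List.finRange d).foldr (fun i g => (pd i)^[j i] g) f

/-- `e(u) = e^{2πiu}`. -/
def eC (u : ℝ) : ℂ := Complex.exp (2 * (Real.pi : ℂ) * Complex.I * (u : ℂ))

/-- A family `{w_T}` of smooth functions, each supported on a product of dyadic intervals,
is `X`-inert if all naturally scaled partial derivatives are bounded by powers of `X_T`. -/
def IsInert {ι : Type*} {d : ℕ} (X : ι → ℝ) (w : ι → (Fin d → ℝ) → ℂ) : Prop :=
  (∀ T, ContDiff ℝ (⊤ : ℕ∞) (w T)) ∧
  (∀ T, ∃ Z : Fin d → ℝ, (∀ i, 0 < Z i) ∧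
    ∀ x ∈ Function.support (w T), ∀ i, Z i ≤ |x i| ∧ |x i| ≤ 2 * Z i) ∧
  (∀ j : Fin d → ℕ, ∃ C : ℝ, ∀ T x,
    (∏ i, |x i| ^ j i) * ‖pdM j (w T) x‖ ≤ C * X T ^ (∑ i, j i))

/-- One-variable version of `IsInert`. -/
def IsInert1 {ι : Type*} (X : ι → ℝ) (w : ι → ℝ → ℂ) : Prop :=
  (∀ T, ContDiff ℝ (⊤ : ℕ∞) (w T)) ∧
  (∀ T, ∃ Z : ℝ, 0 < Z ∧ ∀ x ∈ Function.support (w T), Z ≤ |x| ∧ |x| ≤ 2 * Z) ∧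
  (∀ j : ℕ, ∃ C : ℝ, ∀ T x, |x| ^ j * ‖iteratedDeriv j (w T) x‖ ≤ C * X T ^ j)

end

open scoped ContDiff

/-! ### Iterated partial derivatives along words -/

lemma pd_eq_fderiv {E : Type*} [NormedAddCommGroup E] [NormedSpace ℝ E] {d : ℕ} (i : Fin d)
    {f : (Fin d → ℝ) → E} (hf : Differentiable ℝ f) (x : Fin d → ℝ) :
    pd i f x = fderiv ℝ f x (Pi.single i 1) := by
  have h1 : HasFDerivAt f (fderiv ℝ f x) (Function.update x i (x i)) := by
    rw [Function.update_eq_self]; exact (hf x).hasFDerivAt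
  exact (h1.comp_hasDerivAt (x i) (hasDerivAt_update x i (x i))).deriv

lemma contDiff_pd {E : Type*} [NormedAddCommGroup E] [NormedSpace ℝ E] {d : ℕ} (i : Fin d)
    {f : (Fin d → ℝ) → E} (hf : ContDiff ℝ ∞ f) : ContDiff ℝ ∞ (pd i f) := by
  have : pd i f = fun x => fderiv ℝ f x (Pi.single i 1) :=
    funext (pd_eq_fderiv i (hf.differentiable (by simp)))
  rw [this]
  exact (hf.fderiv_right (m := ∞) (by simp)).clm_apply contDiff_const

lemma pd_comm {E : Type*} [NormedAddCommGroup E] [NormedSpace ℝ E] {d : ℕ} (i k : Fin d)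
    {f : (Fin d → ℝ) → E} (hf : ContDiff ℝ ∞ f) : pd i (pd k f) = pd k (pd i f) := by
  have h : ∀ i, pd i f = fun x => fderiv ℝ f x (Pi.single i 1) := fun i =>
    funext (pd_eq_fderiv i (hf.differentiable (by simp)))
  have hd : Differentiable ℝ (fderiv ℝ f) :=
    (hf.fderiv_right (m := ∞) (by simp)).differentiable (by simp)
  have h2 : ∀ i k x, pd i (pd k f) x =
      fderiv ℝ (fderiv ℝ f) x (Pi.single i 1) (Pi.single k 1) := by
    intro i k x
    rw [pd_eq_fderiv i ((contDiff_pd k hf).differentiable (by simp)), h k,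
      fderiv_clm_apply (hd x) (differentiableAt_const _)]
    simp
  ext x
  rw [h2, h2]
  exact (hf.contDiffAt.isSymmSndFDerivAt (by simpa using (by exact_mod_cast le_top : ((2 : ℕ∞) : WithTop ℕ∞) ≤ ∞))) _ _

/-- The composite `∂_{i_1} ⋯ ∂_{i_n}` of partial derivatives along a word `[i_1, …, i_n]`. -/
noncomputable def pdL {E : Type*} [NormedAddCommGroup E] [NormedSpace ℝ E] {d : ℕ} (l : List (Fin d))
    (f : (Fin d → ℝ) → E) : (Fin d → ℝ) → E :=
  l.foldr pd f

lemma contDiff_pdL {E : Type*} [NormedAddCommGroup E] [NormedSpace ℝ E] {d : ℕ}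
    (l : List (Fin d)) {f : (Fin d → ℝ) → E} (hf : ContDiff ℝ ∞ f) :
    ContDiff ℝ ∞ (pdL l f) := by
  induction l with
  | nil => exact hf
  | cons i l ih => exact contDiff_pd i ih

lemma pdL_perm {E : Type*} [NormedAddCommGroup E] [NormedSpace ℝ E] {d : ℕ}
    {l l' : List (Fin d)} (h : l.Perm l') {f : (Fin d → ℝ) → E} (hf : ContDiff ℝ ∞ f) :
    pdL l f = pdL l' f := by
  induction h with
  | nil => rfl
  | cons i _ ih => exact congrArg (pd i) ih
  | swap i k l => exact pd_comm k i (contDiff_pdL l hf)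
  | trans _ _ h1 h2 => exact h1.trans h2

/-- The sorted word in which each index `i` occurs `j i` times. -/
def word {d : ℕ} (j : Fin d → ℕ) : List (Fin d) :=
  (List.finRange d).flatMap fun i => List.replicate (j i) i

lemma pdM_eq_pdL {E : Type*} [NormedAddCommGroup E] [NormedSpace ℝ E] {d : ℕ}
    (j : Fin d → ℕ) (f : (Fin d → ℝ) → E) : pdM j f = pdL (word j) f := by
  unfold pdM pdL word
  have hr : ∀ (n : ℕ) (i : Fin d) (g : (Fin d → ℝ) → E),
      (List.replicate n i).foldr pd g = (pd i)^[n] g := by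
    intro n i g
    induction n with
    | zero => rfl
    | succ n ih => rw [List.replicate_succ, List.foldr_cons, ih, Function.iterate_succ_apply']
  induction List.finRange d with
  | nil => rfl
  | cons i l ih => rw [List.foldr_cons, List.flatMap_cons, List.foldr_append, hr, ih]

lemma count_word {d : ℕ} (j : Fin d → ℕ) (i : Fin d) : (word j).count i = j i := by
  unfold word
  rw [List.count_flatMap]
  have : (List.count i ∘ fun i => List.replicate (j i) i) = fun k => if k = i then j k else 0 := by
    funext k; simp [List.count_replicate]
  rw [this, ← List.ofFn_eq_map, List.sum_ofFn]
  simp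

lemma prod_word {d : ℕ} (j : Fin d → ℕ) (a : Fin d → ℝ) :
    ((word j).map a).prod = ∏ i, a i ^ j i := by
  rw [Finset.prod_list_map_count]
  simp only [count_word]
  refine Finset.prod_subset (Finset.subset_univ _) fun i _ hi => ?_
  have : (word j).count i = 0 := List.count_eq_zero.2 (by simpa using hi)
  rw [count_word] at this
  simp [this]

lemma length_word {d : ℕ} (j : Fin d → ℕ) : (word j).length = ∑ i, j i := by
  simp [word, List.length_flatMap, ← List.ofFn_eq_map, List.sum_ofFn]

lemma pdL_eq_pdM_count {E : Type*} [NormedAddCommGroup E] [NormedSpace ℝ E] {d : ℕ}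
    (l : List (Fin d)) {f : (Fin d → ℝ) → E} (hf : ContDiff ℝ ∞ f) :
    pdL l f = pdM (fun i => l.count i) f := by
  rw [pdM_eq_pdL]
  exact pdL_perm (List.perm_iff_count.2 fun i => (count_word (fun i => l.count i) i).symm) hf

/-! ### Scaling of the coordinates -/

lemma pdL_comp_mul {E : Type*} [NormedAddCommGroup E] [NormedSpace ℝ E] {d : ℕ}
    (l : List (Fin d)) (a : Fin d → ℝ) (f : (Fin d → ℝ) → E) :
    pdL l (fun u => f (a * u)) = fun u => (l.map a).prod • pdL l f (a * u) := by
  induction l with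
  | nil => simp [pdL]
  | cons i l ih =>
    change pd i (pdL l fun u => f (a * u)) = fun u => ((i :: l).map a).prod • pd i (pdL l f) (a * u)
    rw [ih]
    funext u
    unfold pd
    have hu : ∀ s, a * Function.update u i s = Function.update (a * u) i (a i * s) := by
      intro s; ext k
      by_cases hk : k = i
      · subst hk; simp
      · simp [hk]
    simp only [hu]
    rw [deriv_fun_const_smul_field,
      deriv_comp_mul_left (a i) (fun s => pdL l f (Function.update (a * u) i s)) (u i)]
    simp [smul_smul, mul_comm]

lemma pdM_comp_mul {E : Type*} [NormedAddCommGroup E] [NormedSpace ℝ E] {d : ℕ}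
    (j : Fin d → ℕ) (a : Fin d → ℝ) (f : (Fin d → ℝ) → E) (u : Fin d → ℝ) :
    pdM j (fun u => f (a * u)) u = (∏ i, a i ^ j i) • pdM j f (a * u) := by
  rw [pdM_eq_pdL, pdM_eq_pdL, pdL_comp_mul, prod_word]

/-! ### Partial derivatives and the total derivative -/

lemma iteratedFDeriv_single {E : Type*} [NormedAddCommGroup E] [NormedSpace ℝ E] {d : ℕ}
    {f : (Fin d → ℝ) → E} (hf : ContDiff ℝ ∞ f) (n : ℕ) (k : Fin n → Fin d) (x : Fin d → ℝ) :
    iteratedFDeriv ℝ n f x (fun i => Pi.single (k i) 1) = pdL (List.ofFn k) f x := by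
  induction n generalizing x with
  | zero => simp [pdL]
  | succ n ih =>
    have hd : Differentiable ℝ (iteratedFDeriv ℝ n f) :=
      hf.differentiable_iteratedFDeriv (by exact_mod_cast WithTop.coe_lt_top _)
    rw [List.ofFn_succ]
    change _ = pd (k 0) (pdL (List.ofFn fun i => k i.succ) f) x
    rw [pd_eq_fderiv _ ((contDiff_pdL _ hf).differentiable (by simp)),
      iteratedFDeriv_succ_apply_left, ← funext (ih fun i => k i.succ)]
    have := ((ContinuousMultilinearMap.apply ℝ (fun _ : Fin n => Fin d → ℝ) E
      (fun i => Pi.single (k i.succ) 1)).hasFDerivAt.comp x (hd x).hasFDerivAt).fderiv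
    exact (DFunLike.congr_fun this (Pi.single (k 0) 1)).symm

/-- `∂^j f` is the total derivative evaluated at unit vectors, hence bounded by its norm. -/
lemma norm_pdM_le {E : Type*} [NormedAddCommGroup E] [NormedSpace ℝ E] {d : ℕ}
    {f : (Fin d → ℝ) → E} (hf : ContDiff ℝ ∞ f) (j : Fin d → ℕ) (x : Fin d → ℝ) :
    ‖pdM j f x‖ ≤ ‖iteratedFDeriv ℝ (∑ i, j i) f x‖ := by
  rw [pdM_eq_pdL, ← length_word]
  have h := iteratedFDeriv_single hf _ (word j).get x
  rw [List.ofFn_get] at h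
  rw [← h]
  refine (ContinuousMultilinearMap.le_opNorm _ _).trans ?_
  simp [Pi.norm_single]

/-- Expanding each argument in the standard basis bounds the norm of the total derivative by the
partial derivatives; symmetry of derivatives lets every word be sorted into a multi-index. -/
lemma norm_iteratedFDeriv_le_sum {E : Type*} [NormedAddCommGroup E] [NormedSpace ℝ E] {d : ℕ}
    {f : (Fin d → ℝ) → E} (hf : ContDiff ℝ ∞ f) (n : ℕ) (x : Fin d → ℝ) :
    ‖iteratedFDeriv ℝ n f x‖ ≤
      ∑ k : Fin n → Fin d, ‖pdM (fun i => (List.ofFn k).count i) f x‖ := by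
  refine ContinuousMultilinearMap.opNorm_le_bound (Finset.sum_nonneg fun _ _ => norm_nonneg _) ?_
  intro v
  have hv : v = fun r => ∑ i, v r i • (Pi.single i 1 : Fin d → ℝ) := by
    funext r
    exact pi_eq_sum_univ' (v r)
  conv_lhs => rw [hv]
  rw [ContinuousMultilinearMap.map_sum, Finset.sum_mul]
  refine (norm_sum_le _ _).trans (Finset.sum_le_sum fun k _ => ?_)
  rw [ContinuousMultilinearMap.map_smul_univ, iteratedFDeriv_single hf, pdL_eq_pdM_count _ hf,
    norm_smul, mul_comm, norm_prod]
  gcongr with r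
  exact norm_le_pi_norm _ _

/-! ### Supports of derivatives -/

lemma support_pdL_subset {E : Type*} [NormedAddCommGroup E] [NormedSpace ℝ E] {d : ℕ}
    (l : List (Fin d)) (f : (Fin d → ℝ) → E) : Function.support (pdL l f) ⊆ tsupport f := by
  induction l with
  | nil => exact subset_tsupport f
  | cons i l ih =>
    intro x hx
    by_contra hxf
    refine hx ?_
    have hopen : (tsupport f)ᶜ ∈ nhds (Function.update x i (x i)) := by
      rw [Function.update_eq_self]
      exact (isClosed_tsupport f).isOpen_compl.mem_nhds hxf
    have hc : ContinuousAt (fun s => Function.update x i s) (x i) :=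
      (hasDerivAt_update x i (x i)).continuousAt
    have h0 : (fun s => pdL l f (Function.update x i s)) =ᶠ[nhds (x i)] fun _ => 0 := by
      filter_upwards [hc hopen] with s hs
      by_contra hne
      exact hs (ih hne)
    change deriv (fun s => pdL l f (Function.update x i s)) (x i) = 0
    rw [h0.deriv_eq, deriv_const]

lemma pdM_eq_zero {E : Type*} [NormedAddCommGroup E] [NormedSpace ℝ E] {d : ℕ}
    (j : Fin d → ℕ) {f : (Fin d → ℝ) → E} {K : Set (Fin d → ℝ)} (hK : IsClosed K)
    (hf : Function.support f ⊆ K) {x : Fin d → ℝ} (hx : x ∉ K) : pdM j f x = 0 := by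
  rw [pdM_eq_pdL]
  by_contra h
  exact hx (closure_minimal hf hK (support_pdL_subset _ f h))

/-! ### Uniform bounds on total derivatives -/

/-- In coordinates `u = x / a` adapted to the support, inertness is a uniform bound on the
total derivatives of each order. -/
lemma exists_bound_rescaled {ι : Type*} {d : ℕ} {X : ι → ℝ} {w : ι → (Fin d → ℝ) → ℂ}
    (hw : IsInert X w) {a : ι → Fin d → ℝ} (ha : ∀ T i, 0 < a T i)
    (hs : ∀ T, Function.support (w T) ⊆ Set.Icc (a T) (2 * a T)) (n : ℕ) :
    ∃ C : ℝ, ∀ T u, ‖iteratedFDeriv ℝ n (fun u => w T (a T * u)) u‖ ≤ C * X T ^ n := by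
  choose C hC using hw.2.2
  refine ⟨∑ k : Fin n → Fin d, C (fun i => (List.ofFn k).count i), fun T u => ?_⟩
  have hsm : ContDiff ℝ ∞ (fun u => w T (a T * u)) :=
    (hw.1 T).comp (contDiff_const.mul contDiff_id)
  refine (norm_iteratedFDeriv_le_sum hsm n u).trans ?_
  rw [Finset.sum_mul]
  refine Finset.sum_le_sum fun k _ => ?_
  set j : Fin d → ℕ := fun i => (List.ofFn k).count i with hj
  have hjn : ∑ i, j i = n := by
    have := (List.perm_iff_count.2 fun i => count_word j i : (word j).Perm (List.ofFn k)).length_eq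
    rwa [length_word, List.length_ofFn] at this
  have hb := hC j T (a T * u)
  rw [hjn] at hb
  refine le_trans ?_ hb
  rw [pdM_comp_mul, norm_smul]
  by_cases hu : a T * u ∈ Set.Icc (a T) (2 * a T)
  · rw [norm_prod]
    gcongr with i
    rw [norm_pow, Real.norm_eq_abs, abs_of_pos (ha T i)]
    exact pow_le_pow_left₀ (ha T i).le ((hu.1 i).trans (le_abs_self _)) _
  · rw [pdM_eq_zero j isClosed_Icc (hs T) hu]
    simp

/-- A smooth map has its derivatives of orders `1, …, n` bounded on a compact set by the powers
of a single constant. -/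
lemma exists_pow_bound {E F : Type*} [NormedAddCommGroup E] [NormedSpace ℝ E]
    [NormedAddCommGroup F] [NormedSpace ℝ F] {g : E → F} (hg : ContDiff ℝ ∞ g) {K : Set E}
    (hK : IsCompact K) (n : ℕ) :
    ∃ D : ℝ, 0 ≤ D ∧ ∀ u ∈ K, ∀ i, 1 ≤ i → i ≤ n → ‖iteratedFDeriv ℝ i g u‖ ≤ D ^ i := by
  have h : ∀ i : ℕ, ∃ B : ℝ, ∀ u ∈ K, ‖iteratedFDeriv ℝ i g u‖ ≤ B := fun i =>
    hK.exists_bound_of_continuousOn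
      (hg.continuous_iteratedFDeriv (by exact_mod_cast le_top)).continuousOn
  choose B hB using h
  have h0 : 0 ≤ ∑ i ∈ Finset.range (n + 1), |B i| := Finset.sum_nonneg fun _ _ => abs_nonneg _
  refine ⟨1 + ∑ i ∈ Finset.range (n + 1), |B i|, by linarith, fun u hu i hi hin => ?_⟩
  calc ‖iteratedFDeriv ℝ i g u‖ ≤ |B i| := (hB i u hu).trans (le_abs_self _)
    _ ≤ ∑ i ∈ Finset.range (n + 1), |B i| :=
      Finset.single_le_sum (f := fun i => |B i|) (fun _ _ => abs_nonneg _)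
        (Finset.mem_range.2 (by omega))
    _ ≤ 1 + ∑ i ∈ Finset.range (n + 1), |B i| := by linarith
    _ ≤ _ := le_self_pow₀ (by linarith) (by omega)

/-! ### Specialization of an inert family -/

/-- **Example (Specialization):** substituting `x_1 = X_1 f(x_2/X_2, …, x_d/X_d)` into an
`X`-inert family supported on `x_i ≍ X_i` yields an `X`-inert family in `(x_2, …, x_d)`.
Here `d = m + 1`. -/
theorem stmt_12
    {ι : Type*} {m : ℕ}
    (X X1 : ι → ℝ) (Xs : ι → Fin m → ℝ)
    (hX : ∀ T, 1 ≤ X T) (hX1 : ∀ T, 0 < X1 T) (hXs : ∀ T i, 0 < Xs T i)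
    (w : ι → (Fin (m + 1) → ℝ) → ℂ)
    (hw : IsInert X w)
    (hsupp : ∀ T, ∀ x ∈ Function.support (w T),
      (X1 T ≤ x 0 ∧ x 0 ≤ 2 * X1 T) ∧ ∀ i : Fin m, Xs T i ≤ x i.succ ∧ x i.succ ≤ 2 * Xs T i)
    (f : (Fin m → ℝ) → ℝ) (hf : ContDiff ℝ (⊤ : ℕ∞) f) :
    IsInert X (fun T (y : Fin m → ℝ) =>
      w T (Fin.cons (X1 T * f (fun i => y i / Xs T i)) y)) := by
  set a : ι → Fin (m + 1) → ℝ := fun T => Fin.cons (X1 T) (Xs T) with ha_def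
  have ha : ∀ T i, 0 < a T i := fun T i => by
    refine Fin.cases ?_ (fun i => ?_) i
    · exact hX1 T
    · exact hXs T i
  have hs : ∀ T, Function.support (w T) ⊆ Set.Icc (a T) (2 * a T) := fun T x hx =>
    ⟨fun i => Fin.cases (hsupp T x hx).1.1 (fun i => ((hsupp T x hx).2 i).1) i,
      fun i => Fin.cases (hsupp T x hx).1.2 (fun i => ((hsupp T x hx).2 i).2) i⟩
  set φ : (Fin m → ℝ) → Fin (m + 1) → ℝ := fun u => Fin.cons (f u) u with hφ_def
  have hφ : ContDiff ℝ ∞ φ := contDiff_pi.2 fun i => by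
    refine Fin.cases ?_ (fun i => ?_) i
    · exact hf
    · exact contDiff_apply ℝ ℝ i
  have hv : ∀ T, ContDiff ℝ ∞ (fun u => w T (a T * u)) := fun T =>
    (hw.1 T).comp (contDiff_const.mul contDiff_id)
  set V : ι → (Fin m → ℝ) → ℂ := fun T => (fun u => w T (a T * u)) ∘ φ with hV_def
  have hVsm : ∀ T, ContDiff ℝ ∞ (V T) := fun T => (hv T).comp hφ
  have hVs : ∀ T, Function.support (V T) ⊆ Set.Icc 1 2 := fun T u hu => by
    have h := hsupp T _ hu
    refine ⟨fun i => ?_, fun i => ?_⟩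
    · exact (le_mul_iff_one_le_right (hXs T i)).1 (h.2 i).1
    · have := (h.2 i).2
      rw [mul_comm 2] at this
      exact (mul_le_mul_iff_right₀ (hXs T i)).1 this
  have hW : ∀ T, (fun y : Fin m → ℝ => w T (Fin.cons (X1 T * f (fun i => y i / Xs T i)) y)) =
      fun y => V T ((Xs T)⁻¹ * y) := fun T => by
    funext y
    have hy : (fun i => y i / Xs T i) = (Xs T)⁻¹ * y := by
      funext i; simp [div_eq_inv_mul]
    rw [hy]
    refine congrArg (w T) (funext fun i => ?_)
    refine Fin.cases ?_ (fun i => ?_) i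
    · rfl
    · simp [ha_def, hφ_def, (hXs T i).ne']
  refine ⟨fun T => ?_, fun T => ⟨Xs T, hXs T, fun y hy i => ?_⟩, fun j => ?_⟩
  · beta_reduce
    rw [hW]
    exact (hVsm T).comp (contDiff_const.mul contDiff_id)
  · have h := (hsupp T _ hy).2 i
    simp only [Fin.cons_succ] at h
    rwa [abs_of_pos ((hXs T i).trans_le h.1)]
  set n := ∑ i, j i with hn
  choose C hC using exists_bound_rescaled hw ha hs
  obtain ⟨D, hD0, hD⟩ := exists_pow_bound hφ (isCompact_Icc (a := (1 : Fin m → ℝ)) (b := 2)) n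
  set B : ℝ := ∑ i ∈ Finset.range (n + 1), |C i| with hB
  have hB0 : 0 ≤ B := Finset.sum_nonneg fun _ _ => abs_nonneg _
  refine ⟨2 ^ n * (n.factorial * B * D ^ n), fun T y => ?_⟩
  have hXn : 0 ≤ X T ^ n := pow_nonneg (zero_le_one.trans (hX T)) _
  beta_reduce
  rw [hW, pdM_comp_mul]
  set u : Fin m → ℝ := (Xs T)⁻¹ * y with hu_def
  have hprod : (∏ i, |y i| ^ j i) * ‖(∏ i, (Xs T)⁻¹ i ^ j i) • pdM j (V T) u‖ =
      (∏ i, |u i| ^ j i) * ‖pdM j (V T) u‖ := by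
    rw [norm_smul, ← mul_assoc, norm_prod, ← Finset.prod_mul_distrib]
    congr 1
    refine Finset.prod_congr rfl fun i _ => ?_
    rw [hu_def, Pi.mul_apply, abs_mul, mul_pow, norm_pow, Real.norm_eq_abs, mul_comm]
  rw [hprod]
  by_cases hu : u ∈ Set.Icc (1 : Fin m → ℝ) 2
  · have h1 : ∏ i, |u i| ^ j i ≤ 2 ^ n := by
      rw [hn, ← Finset.prod_pow_eq_pow_sum]
      gcongr with i
      rw [abs_of_nonneg (zero_le_one.trans (hu.1 i))]
      exact hu.2 i
    have h2 : ‖pdM j (V T) u‖ ≤ n.factorial * (B * X T ^ n) * D ^ n := by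
      refine (norm_pdM_le (hVsm T) j u).trans ?_
      refine norm_iteratedFDeriv_comp_le (hv T) hφ (by exact_mod_cast le_top) u
        (fun i hi => ?_) (hD u hu)
      -- lower-order derivatives of the outer function are absorbed because `1 ≤ X T`
      calc _ ≤ C i * X T ^ i := hC i T _
        _ ≤ |C i| * X T ^ i :=
          mul_le_mul_of_nonneg_right (le_abs_self _) (pow_nonneg (zero_le_one.trans (hX T)) _)
        _ ≤ B * X T ^ n := by
          refine mul_le_mul ?_ (pow_le_pow_right₀ (hX T) hi)
            (pow_nonneg (zero_le_one.trans (hX T)) _) hB0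
          exact Finset.single_le_sum (f := fun i => |C i|) (fun _ _ => abs_nonneg _)
            (Finset.mem_range.2 (by omega))
    calc _ ≤ 2 ^ n * (n.factorial * (B * X T ^ n) * D ^ n) := by gcongr
      _ = _ := by ring
  · rw [pdM_eq_zero j isClosed_Icc (hVs T) hu]
    simp only [norm_zero, mul_zero]
    positivity
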